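/- Let α be a type and let A, B be lists over α of equal length. Then for every k ≥ 2, the length of S_{A,B}(k) satisfies |S(k)| = |S(a(k))| + |S(a(k−1))|. -/

import Mathlib

/-- Stern's diatomic sequence. -/
def stern : ℕ → ℕ
  | 0 => 0
  | 1 => 1
  | n + 2 =>
    if (n + 2) % 2 = 0 then stern ((n + 2) / 2)
    else stern ((n + 2) / 2) + stern ((n + 2) / 2 + 1)
decreasing_by all_goals omega

/-- OEIS A003602: a(1)=1, a(2n)=a(n), a(2n+1)=n+1. (a(0)=0 as junk value.) -/
def aseq : ℕ → ℕ
  | 0 => 0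
  | 1 => 1
  | n + 2 =>
    if (n + 2) % 2 = 0 then aseq ((n + 2) / 2)
    else (n + 2) / 2 + 1
decreasing_by all_goals omega

-- the modified sequence `a*`: zero at powers of two.
open Classical in
noncomputable def aStar (j : ℕ) : ℕ :=
  if ∃ k, j = 2 ^ k then 0 else aseq j

theorem aseq_le (n : ℕ) : aseq n ≤ n := by
  induction n using Nat.strong_induction_on with
  | _ n ih =>
    match n with
    | 0 => simp [aseq]
    | 1 => simp [aseq]
    | m + 2 =>
      rw [aseq]
      split
      · exact le_trans (ih ((m + 2) / 2) (by omega)) (by omega)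
      · omega

theorem aStar_le (j : ℕ) : aStar j ≤ j := by
  unfold aStar
  split
  · omega
  · exact aseq_le j

/-- The Markov-type sequence `S_{A,B}(n)`. -/
noncomputable def mseq {α : Type*} (A B : List α) : ℕ → List α
  | 0 => A
  | 1 => B
  | 2 => A ++ B
  | n + 3 =>
    if (n + 3) % 2 = 0 then
      mseq A B ((n + 3) / 2) ++ mseq A B (aseq ((n + 3) / 2))
    else
      mseq A B (aStar ((n + 4) / 2 - 1)) ++ mseq A B ((n + 4) / 2)
decreasing_by
  all_goals first
    | omega
    | exact lt_of_le_of_lt (aseq_le _) (by omega)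
    | exact lt_of_le_of_lt (aStar_le _) (by omega)

/-!
The recursion for `S` at `2 * j` and `2 * j + 1` involves `j`, `j + 1` and a value of `a` or `a*` at
`j`, while `a (2 * j) = a j`, `a (2 * j - 1) = j` and `a (2 * j + 1) = j + 1`. So the claim merely
restates the recursion once `a*` is replaced by `a`, and this does not affect lengths: the two
sequences differ only at powers of two, where `a* = 0` and `a = 1`, and `|S 0| = |A| = |B| = |S 1|`.
-/

theorem aseq_two_mul (n : ℕ) : aseq (2 * n) = aseq n := by
  cases n with
  | zero => rfl
  | succ m =>
    rw [Nat.mul_succ, aseq, if_pos (by omega)]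
    congr 1
    omega

theorem aseq_two_mul_add_one (n : ℕ) : aseq (2 * n + 1) = n + 1 := by
  cases n with
  | zero => rw [mul_zero, zero_add, aseq]
  | succ m =>
    rw [show 2 * (m + 1) + 1 = 2 * m + 1 + 2 by ring, aseq, if_neg (by omega)]
    omega

theorem aseq_two_pow (k : ℕ) : aseq (2 ^ k) = 1 := by
  induction k with
  | zero => simp only [pow_zero, aseq]
  | succ k ih => rw [pow_succ', aseq_two_mul, ih]

section

variable {α : Type*} (A B : List α)

theorem mseq_two_mul {j : ℕ} (hj : 2 ≤ j) :
    mseq A B (2 * j) = mseq A B j ++ mseq A B (aseq j) := by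
  obtain ⟨i, rfl⟩ := Nat.exists_eq_add_of_le' hj
  have half : (2 * i + 1 + 3) / 2 = i + 2 := by omega
  rw [show 2 * (i + 2) = 2 * i + 1 + 3 by ring, mseq, if_pos (by omega), half]

theorem mseq_two_mul_add_one {j : ℕ} (hj : 1 ≤ j) :
    mseq A B (2 * j + 1) = mseq A B (aStar j) ++ mseq A B (j + 1) := by
  obtain ⟨i, rfl⟩ := Nat.exists_eq_add_of_le' hj
  have half : (2 * i + 4) / 2 = i + 2 := by omega
  rw [show 2 * (i + 1) + 1 = 2 * i + 3 by ring, mseq, if_neg (by omega), half,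
    Nat.add_succ_sub_one]

variable {A B}

theorem length_mseq_aStar (h : A.length = B.length) (j : ℕ) :
    (mseq A B (aStar j)).length = (mseq A B (aseq j)).length := by
  by_cases hj : ∃ k, j = 2 ^ k
  · rw [aStar, if_pos hj]
    obtain ⟨k, rfl⟩ := hj
    rw [aseq_two_pow, mseq, mseq, h]
  · rw [aStar, if_neg hj]

theorem length_mseq_two_mul (h : A.length = B.length) {j : ℕ} (hj : 1 ≤ j) :
    (mseq A B (2 * j)).length = (mseq A B j).length + (mseq A B (aseq j)).length := by
  obtain rfl | hj := hj.eq_or_lt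
  · have aseq_one : aseq 1 = 1 := aseq_two_pow 0
    rw [aseq_one, mul_one, mseq, mseq, List.length_append, h]
  · rw [mseq_two_mul A B hj, List.length_append]

theorem length_mseq_two_mul_add_one (h : A.length = B.length) {j : ℕ} (hj : 1 ≤ j) :
    (mseq A B (2 * j + 1)).length = (mseq A B (aseq j)).length + (mseq A B (j + 1)).length := by
  rw [mseq_two_mul_add_one A B hj, List.length_append, length_mseq_aStar h]

end

/-- if `A` and `B` have equal length then for every `k ≥ 2`,
`|S(k)| = |S(a(k))| + |S(a(k−1))|`. -/
theorem stmt5 {α : Type*} (A B : List α) (h : A.length = B.length) (k : ℕ) (hk : 2 ≤ k) :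
    (mseq A B k).length = (mseq A B (aseq k)).length + (mseq A B (aseq (k - 1))).length := by
  obtain ⟨j, rfl | rfl⟩ := Nat.even_or_odd' k
  · obtain ⟨i, rfl⟩ : ∃ i, j = i + 1 := Nat.exists_eq_add_of_le' (by omega)
    have pred_eq : 2 * (i + 1) - 1 = 2 * i + 1 := by omega
    rw [pred_eq, aseq_two_mul, aseq_two_mul_add_one, length_mseq_two_mul h (by omega), add_comm]
  · rw [Nat.add_sub_cancel, aseq_two_mul_add_one, aseq_two_mul,
      length_mseq_two_mul_add_one h (by omega), add_comm]
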